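/- For the q-expansion coefficients: let a(n) count partitions of n into parts ≡ ±2 (mod 5). Then a(n) also equals the number of partitions of n into parts with difference at least 2 between consecutive parts and smallest part at least 2 (the second Rogers–Ramanujan identity): ∏_{n≥0} 1/((1-q^{5n+2})(1-q^{5n+3})) = ∑_{n≥0} q^{n²+n}/((1-q)(1-q²)⋯(1-q^n)). -/

import Mathlib

open scoped BigOperators

/-- The reciprocal `1 / ((1 - q) ⋯ (1 - q ^ n))` of a finite `q`-Pochhammer symbol. -/
noncomputable def qPochhammerInv {K : Type*} [Field K] (q : K) (n : ℕ) : K :=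
  (∏ j ∈ Finset.range n, (1 - q ^ (j + 1)))⁻¹

section Field

variable {K : Type*} [Field K] {q : K}

lemma qPochhammerInv_zero : qPochhammerInv q 0 = 1 := by
  simp [qPochhammerInv]

lemma one_sub_mul_qPochhammerInv_succ (hq : ∀ k : ℕ, 1 - q ^ (k + 1) ≠ 0) (n : ℕ) :
    (1 - q ^ (n + 1)) * qPochhammerInv q (n + 1) = qPochhammerInv q n := by
  have := hq n
  rw [qPochhammerInv, qPochhammerInv, Finset.prod_range_succ, mul_inv]
  field_simp

lemma qVandermonde (hq : ∀ k : ℕ, 1 - q ^ (k + 1) ≠ 0) (n c : ℕ) :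
    ∑ k ∈ Finset.range (n + 1), q ^ (k ^ 2 + k * c) *
        (qPochhammerInv q (n - k) * qPochhammerInv q k * qPochhammerInv q (k + c)) =
      qPochhammerInv q n * qPochhammerInv q (n + c) := by
  have hg := one_sub_mul_qPochhammerInv_succ hq
  induction n generalizing c with
  | zero => simp [qPochhammerInv_zero]
  | succ n ih =>
    apply mul_left_cancel₀ (hq n)
    have hsplit : (1 - q ^ (n + 1)) * ∑ k ∈ Finset.range (n + 1 + 1), q ^ (k ^ 2 + k * c) *
          (qPochhammerInv q (n + 1 - k) * qPochhammerInv q k * qPochhammerInv q (k + c)) =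
        ∑ k ∈ Finset.range (n + 1 + 1), (1 - q ^ (n + 1 - k)) * (q ^ (k ^ 2 + k * c) *
          (qPochhammerInv q (n + 1 - k) * qPochhammerInv q k * qPochhammerInv q (k + c))) +
        ∑ k ∈ Finset.range (n + 1 + 1), q ^ (n + 1 - k) * (1 - q ^ k) * (q ^ (k ^ 2 + k * c) *
          (qPochhammerInv q (n + 1 - k) * qPochhammerInv q k * qPochhammerInv q (k + c))) := by
      rw [Finset.mul_sum, ← Finset.sum_add_distrib]
      refine Finset.sum_congr rfl fun k hk => ?_
      have hpow : q ^ (n + 1) = q ^ (n + 1 - k) * q ^ k := by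
        rw [← pow_add]; congr 1; have := Finset.mem_range.1 hk; omega
      rw [hpow]; ring
    have hleft : ∑ k ∈ Finset.range (n + 1 + 1), (1 - q ^ (n + 1 - k)) * (q ^ (k ^ 2 + k * c) *
          (qPochhammerInv q (n + 1 - k) * qPochhammerInv q k * qPochhammerInv q (k + c))) =
        qPochhammerInv q n * qPochhammerInv q (n + c) := by
      rw [Finset.sum_range_succ, ← ih c]
      simp only [Nat.sub_self, pow_zero, sub_self, zero_mul, add_zero]
      refine Finset.sum_congr rfl fun k hk => ?_
      obtain ⟨d, rfl⟩ := Nat.exists_eq_add_of_le (Finset.mem_range_succ_iff.1 hk)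
      rw [show k + d + 1 - k = d + 1 by omega, Nat.add_sub_cancel_left, ← hg d]
      ring
    have hright : ∑ k ∈ Finset.range (n + 1 + 1), q ^ (n + 1 - k) * (1 - q ^ k) *
          (q ^ (k ^ 2 + k * c) *
          (qPochhammerInv q (n + 1 - k) * qPochhammerInv q k * qPochhammerInv q (k + c))) =
        q ^ (n + c + 1) * (qPochhammerInv q n * qPochhammerInv q (n + (c + 1))) := by
      rw [Finset.sum_range_succ', ← ih (c + 1), Finset.mul_sum]
      simp only [pow_zero, sub_self, mul_zero, zero_mul, add_zero]
      refine Finset.sum_congr rfl fun k hk => ?_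
      obtain ⟨d, rfl⟩ := Nat.exists_eq_add_of_le (Finset.mem_range_succ_iff.1 hk)
      rw [show k + d + 1 - (k + 1) = d by omega, Nat.add_sub_cancel_left, ← hg k,
        show k + 1 + c = k + (c + 1) by ring]
      ring
    rw [hsplit, hleft, hright, ← hg n, show n + (c + 1) = n + c + 1 by ring,
      show n + 1 + c = n + c + 1 by ring, ← hg (n + c)]
    ring

/-- Bailey's lemma for pairs relative to `q`, with both parameters sent to infinity. -/
lemma sum_bailey (hq : ∀ k : ℕ, 1 - q ^ (k + 1) ≠ 0) (α : ℕ → K) (N : ℕ) :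
    ∑ s ∈ Finset.range (N + 1), q ^ (s ^ 2 + s) * qPochhammerInv q (N - s) *
        ∑ m ∈ Finset.range (s + 1), α m *
          (qPochhammerInv q (s - m) * qPochhammerInv q (s + m + 1)) =
      ∑ m ∈ Finset.range (N + 1), q ^ (m ^ 2 + m) * α m *
        (qPochhammerInv q (N - m) * qPochhammerInv q (N + m + 1)) := by
  simp only [Finset.mul_sum]
  rw [Finset.sum_comm' (t' := Finset.range (N + 1)) (s' := fun m => Finset.Ico m (N + 1))
    (by intro x y; simp only [Finset.mem_range, Finset.mem_Ico]; omega)]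
  refine Finset.sum_congr rfl fun m hm => ?_
  obtain ⟨n, rfl⟩ := Nat.exists_eq_add_of_le (Finset.mem_range_succ_iff.1 hm)
  rw [Finset.sum_Ico_eq_sum_range, show m + n + 1 - m = n + 1 by omega, Nat.add_sub_cancel_left,
    show m + n + m + 1 = n + (2 * m + 1) by ring, ← qVandermonde hq, Finset.mul_sum]
  refine Finset.sum_congr rfl fun k _ => ?_
  rw [Nat.add_sub_cancel_left, Nat.add_sub_add_left, show m + k + m + 1 = k + (2 * m + 1) by ring]
  ring

lemma choose_add_two (a b : ℕ) : (a + b).choose 2 = a.choose 2 + b.choose 2 + a * b := by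
  induction b with
  | zero => simp
  | succ b ih =>
    rw [← add_assoc, Nat.choose_succ_succ' (a + b), Nat.choose_succ_succ' b, ih]
    simp only [Nat.choose_one_right]
    ring

lemma sq_add_self_eq_choose (m : ℕ) : m ^ 2 + m = 2 * m.choose 2 + 2 * m := by
  induction m with
  | zero => rfl
  | succ m ih =>
    rw [choose_add_two m 1]
    simp only [Nat.choose_succ_self]
    linarith

/-- The unit Bailey pair relative to `q`. -/
lemma sum_unit_bailey (hq : ∀ k : ℕ, 1 - q ^ (k + 1) ≠ 0) (s : ℕ) :
    ∑ m ∈ Finset.range (s + 1), (-1) ^ m * q ^ m.choose 2 * (1 - q ^ (2 * m + 1)) *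
      (qPochhammerInv q (s - m) * qPochhammerInv q (s + m + 1)) = if s = 0 then 1 else 0 := by
  have hg := one_sub_mul_qPochhammerInv_succ hq
  obtain _ | s := s
  · have := hg 0
    simpa [qPochhammerInv_zero] using this
  · have hpartial : ∀ M ≤ s, (1 - q ^ (s + 1)) * ∑ m ∈ Finset.range (M + 1),
        (-1) ^ m * q ^ m.choose 2 * (1 - q ^ (2 * m + 1)) *
          (qPochhammerInv q (s + 1 - m) * qPochhammerInv q (s + 1 + m + 1)) =
        (-1) ^ M * q ^ (M + 1).choose 2 * (1 - q ^ (M + 1)) *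
          (qPochhammerInv q (s - M) * qPochhammerInv q (s + M + 2)) := by
      intro M
      induction M with
      | zero =>
        intro _
        simp only [zero_add, Finset.sum_range_one, Nat.sub_zero, ← hg s]
        simp
        ring
      | succ M ih =>
        intro hM
        obtain ⟨d, rfl⟩ := Nat.exists_eq_add_of_le hM
        rw [Finset.sum_range_succ, mul_add, ih (by omega)]
        rw [show M + 1 + d - M = d + 1 by omega, show M + 1 + d + 1 - (M + 1) = d + 1 by omega,
          Nat.add_sub_cancel_left, ← hg d, ← hg (M + 1 + d + M + 2),
          show M + 1 + d + 1 + (M + 1) + 1 = M + 1 + d + M + 2 + 1 by ring,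
          show M + 1 + d + (M + 1) + 2 = M + 1 + d + M + 2 + 1 by ring, choose_add_two (M + 1) 1]
        simp only [Nat.choose_succ_self]
        ring
    apply mul_left_cancel₀ (hq s)
    rw [Finset.sum_range_succ, mul_add, hpartial s le_rfl, Nat.sub_self, Nat.sub_self,
      show s + 1 + (s + 1) + 1 = s + s + 2 + 1 by ring, ← hg (s + s + 2)]
    simp [qPochhammerInv_zero]
    ring

lemma sum_rogersRamanujan_finite (hq : ∀ k : ℕ, 1 - q ^ (k + 1) ≠ 0) (N : ℕ) :
    ∑ s ∈ Finset.range (N + 1), q ^ (s ^ 2 + s) * qPochhammerInv q s * qPochhammerInv q (N - s) =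
      ∑ m ∈ Finset.range (N + 1), (-1) ^ m * q ^ (5 * m.choose 2 + 4 * m) * (1 - q ^ (2 * m + 1)) *
        (qPochhammerInv q (N - m) * qPochhammerInv q (N + m + 1)) := by
  have h := sum_bailey hq (fun m => q ^ (m ^ 2 + m) *
    ((-1) ^ m * q ^ m.choose 2 * (1 - q ^ (2 * m + 1)))) N
  simp only [← sum_bailey hq (fun m => (-1) ^ m * q ^ m.choose 2 * (1 - q ^ (2 * m + 1))),
    sum_unit_bailey hq] at h
  convert h using 1
  · refine Finset.sum_congr rfl fun s _ => ?_
    simp only [mul_ite, mul_one, mul_zero, Finset.sum_ite_eq', Finset.mem_range, Nat.succ_pos,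
      if_true]
    simp
    ring
  · refine Finset.sum_congr rfl fun m _ => ?_
    rw [sq_add_self_eq_choose]
    ring

/-- Rothe's form of the `q`-binomial theorem. -/
lemma sum_qBinomial (hq : ∀ k : ℕ, 1 - q ^ (k + 1) ≠ 0) (x y : K) (N : ℕ) :
    ∑ i ∈ Finset.range (N + 1), (-1) ^ i * q ^ i.choose 2 * y ^ i * x ^ (N - i) *
        (qPochhammerInv q (N - i) * qPochhammerInv q i) =
      qPochhammerInv q N * ∏ i ∈ Finset.range N, (x - y * q ^ i) := by
  have hg := one_sub_mul_qPochhammerInv_succ hq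
  induction N generalizing y with
  | zero => simp [qPochhammerInv_zero]
  | succ N ih =>
    apply mul_left_cancel₀ (hq N)
    have hsplit : (1 - q ^ (N + 1)) * ∑ i ∈ Finset.range (N + 1 + 1),
          (-1) ^ i * q ^ i.choose 2 * y ^ i * x ^ (N + 1 - i) *
            (qPochhammerInv q (N + 1 - i) * qPochhammerInv q i) =
        ∑ i ∈ Finset.range (N + 1 + 1), q ^ i * (1 - q ^ (N + 1 - i)) *
          ((-1) ^ i * q ^ i.choose 2 * y ^ i * x ^ (N + 1 - i) *
            (qPochhammerInv q (N + 1 - i) * qPochhammerInv q i)) +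
        ∑ i ∈ Finset.range (N + 1 + 1), (1 - q ^ i) *
          ((-1) ^ i * q ^ i.choose 2 * y ^ i * x ^ (N + 1 - i) *
            (qPochhammerInv q (N + 1 - i) * qPochhammerInv q i)) := by
      rw [Finset.mul_sum, ← Finset.sum_add_distrib]
      refine Finset.sum_congr rfl fun k hk => ?_
      have hpow : q ^ (N + 1) = q ^ (N + 1 - k) * q ^ k := by
        rw [← pow_add]; congr 1; have := Finset.mem_range.1 hk; omega
      rw [hpow]; ring
    rw [hsplit, Finset.sum_range_succ, Finset.sum_range_succ' _ (N + 1)]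
    simp only [Nat.sub_self, pow_zero, sub_self, mul_zero, zero_mul, add_zero]
    have hstep := ih (y * q)
    have hprod : ∏ i ∈ Finset.range N, (x - y * q * q ^ i) =
        ∏ i ∈ Finset.range N, (x - y * q ^ (i + 1)) :=
      Finset.prod_congr rfl fun i _ => by ring
    rw [hprod] at hstep
    rw [Finset.prod_range_succ', ← mul_assoc, hg N, ← mul_assoc, ← hstep, Finset.sum_mul,
      ← Finset.sum_add_distrib]
    refine Finset.sum_congr rfl fun k hk => ?_
    obtain ⟨d, rfl⟩ := Nat.exists_eq_add_of_le (Finset.mem_range_succ_iff.1 hk)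
    rw [show k + d + 1 - k = d + 1 by omega, show k + d + 1 - (k + 1) = d by omega,
      Nat.add_sub_cancel_left, choose_add_two k 1, ← hg d, ← hg k]
    simp only [Nat.choose_succ_self]
    ring

/-- A finite form of the Jacobi triple product, folded about the centre. -/
lemma sum_jacobiTriple_finite (hq : ∀ k : ℕ, 1 - q ^ (k + 1) ≠ 0) (hq0 : q ≠ 0) (n : ℕ) :
    ∑ m ∈ Finset.range (n + 1), (-1) ^ m * q ^ (5 * m.choose 2 + 4 * m) * (1 - q ^ (2 * m + 1)) *
        (qPochhammerInv (q ^ 5) (n - m) * qPochhammerInv (q ^ 5) (n + m + 1)) =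
      qPochhammerInv (q ^ 5) (2 * n + 1) * ((∏ i ∈ Finset.range (n + 1), (1 - q ^ (5 * i + 1))) *
        ∏ i ∈ Finset.range n, (1 - q ^ (5 * i + 4))) := by
  have hq5 (k : ℕ) : 1 - (q ^ 5) ^ (k + 1) ≠ 0 := by
    rw [← pow_mul]; exact hq (5 * k + 4)
  have hrefl : ∏ i ∈ Finset.range n, (q ^ (5 * n) - q * (q ^ 5) ^ i) =
      (-1) ^ n * q ^ (5 * n.choose 2 + n) * ∏ i ∈ Finset.range n, (1 - q ^ (5 * i + 4)) := by
    have hmono : (-1) ^ n * q ^ (5 * n.choose 2 + n) =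
        ∏ i ∈ Finset.range n, -q ^ (5 * i + 1) := by
      induction n with
      | zero => simp
      | succ n ih =>
        rw [Finset.prod_range_succ, ← ih, choose_add_two n 1]
        simp only [Nat.choose_succ_self]
        ring
    rw [hmono, ← Finset.prod_range_reflect (fun i => 1 - q ^ (5 * i + 4)),
      ← Finset.prod_mul_distrib]
    refine Finset.prod_congr rfl fun i hi => ?_
    obtain ⟨d, rfl⟩ := Nat.exists_eq_add_of_lt (Finset.mem_range.1 hi)
    rw [show i + d + 1 - 1 - i = d by omega]
    ring
  have htop : ∏ i ∈ Finset.range (n + 1), (q ^ (5 * n) - q * (q ^ 5) ^ (n + i)) =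
      q ^ (5 * n * (n + 1)) * ∏ i ∈ Finset.range (n + 1), (1 - q ^ (5 * i + 1)) := by
    have hconst : q ^ (5 * n * (n + 1)) = ∏ _i ∈ Finset.range (n + 1), q ^ (5 * n) := by
      rw [Finset.prod_const, Finset.card_range, ← pow_mul]
    rw [hconst, ← Finset.prod_mul_distrib]
    exact Finset.prod_congr rfl fun i _ => by ring
  have hbinom := sum_qBinomial hq5 (q ^ (5 * n)) q (n + (n + 1))
  rw [Finset.prod_range_add, hrefl, htop, show n + (n + 1) + 1 = (n + 1) + (n + 1) by ring,
    Finset.sum_range_add, ← Finset.sum_range_reflect, ← Finset.sum_add_distrib] at hbinom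
  apply mul_left_cancel₀ (mul_ne_zero (pow_ne_zero n (neg_ne_zero.2 (one_ne_zero (α := K))))
    (pow_ne_zero (5 * n.choose 2 + n + 5 * n * (n + 1)) hq0))
  rw [show 2 * n + 1 = n + (n + 1) by ring]
  refine Eq.trans ?_ (hbinom.trans (by ring))
  rw [Finset.mul_sum]
  refine Finset.sum_congr rfl fun m hm => ?_
  obtain ⟨d, rfl⟩ := Nat.exists_eq_add_of_le (Finset.mem_range_succ_iff.1 hm)
  have hsgn : (-1 : K) ^ (m * 2) = 1 := by simp [pow_mul']
  have hsq := sq_add_self_eq_choose m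
  rw [show m + d + 1 - 1 - m = d by omega, show m + d + (m + d + 1) - d = m + d + m + 1 by omega,
    show m + d + (m + d + 1) - (m + d + 1 + m) = d by omega, Nat.add_sub_cancel_left,
    show m + d + 1 + m = d + 2 * m + 1 by ring, show m + d + m + 1 = d + 2 * m + 1 by ring]
  have h1 : (-1 : K) ^ (m + d) * (-1) ^ m = (-1) ^ d := by
    rw [← pow_add, show m + d + m = m * 2 + d by ring, pow_add, hsgn, one_mul]
  have h2 : (-1 : K) ^ (d + 2 * m + 1) = - (-1) ^ d := by
    rw [show d + 2 * m + 1 = m * 2 + d + 1 by ring, pow_succ, pow_add, hsgn]; ring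
  have h3 : (q ^ 5) ^ d.choose 2 * q ^ d * (q ^ (5 * (m + d))) ^ (d + 2 * m + 1) =
      q ^ (5 * (m + d).choose 2 + (m + d) + 5 * (m + d) * (m + d + 1)) *
        q ^ (5 * m.choose 2 + 4 * m) := by
    simp only [← pow_mul, ← pow_add]
    congr 1
    rw [choose_add_two]
    linarith
  have h4 : (q ^ 5) ^ (d + 2 * m + 1).choose 2 * q ^ (d + 2 * m + 1) * (q ^ (5 * (m + d))) ^ d =
      q ^ (5 * (m + d).choose 2 + (m + d) + 5 * (m + d) * (m + d + 1)) *
        q ^ (5 * m.choose 2 + 4 * m) * q ^ (2 * m + 1) := by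
    simp only [← pow_mul, ← pow_add]
    congr 1
    rw [choose_add_two (d + 2 * m) 1, choose_add_two d, two_mul m, choose_add_two m m,
      choose_add_two]
    simp only [Nat.choose_succ_self]
    linarith
  rw [h2, ← h1]
  linear_combination
    (-1) ^ (m + d) * (-1) ^ m *
      (qPochhammerInv (q ^ 5) d * qPochhammerInv (q ^ 5) (d + 2 * m + 1)) * (h4 - h3)

end Field

section Analytic

open Filter Topology

variable {q : ℂ}

lemma one_sub_pow_succ_ne_zero (hq : ‖q‖ < 1) (k : ℕ) : 1 - q ^ (k + 1) ≠ 0 := by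
  intro h
  have h1 : ‖q ^ (k + 1)‖ < 1 := by
    rw [norm_pow]; exact pow_lt_one₀ (norm_nonneg q) hq k.succ_ne_zero
  rw [← sub_eq_zero.1 h, norm_one] at h1
  exact lt_irrefl _ h1

lemma norm_pow_le_norm_pow (hq : ‖q‖ < 1) {m n : ℕ} (h : m ≤ n) : ‖q ^ n‖ ≤ ‖q‖ ^ m := by
  rw [norm_pow]
  exact pow_le_pow_of_le_one (norm_nonneg q) hq.le h

lemma summable_norm_pow_comp (hq : ‖q‖ < 1) {e : ℕ → ℕ} (he : ∀ i, i ≤ e i) :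
    Summable fun i => ‖-q ^ e i‖ := by
  refine (summable_geometric_of_lt_one (norm_nonneg q) hq).of_nonneg_of_le
    (fun _ => norm_nonneg _) fun i => ?_
  rw [norm_neg]
  exact norm_pow_le_norm_pow hq (he i)

lemma multipliable_one_sub_pow (hq : ‖q‖ < 1) {e : ℕ → ℕ} (he : ∀ i, i ≤ e i) :
    Multipliable fun i => 1 - q ^ e i := by
  simpa only [sub_eq_add_neg] using
    multipliable_one_add_of_summable (summable_norm_pow_comp hq he)

lemma tprod_one_sub_pow_ne_zero (hq : ‖q‖ < 1) {e : ℕ → ℕ} (he : ∀ i, i < e i) :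
    ∏' i, (1 - q ^ e i) ≠ 0 := by
  simp only [sub_eq_add_neg]
  refine tprod_one_add_ne_zero_of_summable (fun i => ?_)
    (summable_norm_pow_comp hq fun i => (he i).le)
  obtain ⟨k, hk⟩ := Nat.exists_eq_succ_of_ne_zero (Nat.ne_zero_of_lt (he i))
  rw [hk, ← sub_eq_add_neg]
  exact one_sub_pow_succ_ne_zero hq k

lemma tendsto_qPochhammerInv (hq : ‖q‖ < 1) :
    Tendsto (qPochhammerInv q) atTop (𝓝 (∏' j : ℕ, (1 - q ^ (j + 1)))⁻¹) :=
  (multipliable_one_sub_pow hq fun i => i.le_succ).hasProd.tendsto_prod_nat.inv₀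
    (tprod_one_sub_pow_ne_zero hq fun i => i.lt_succ_self)

lemma exists_norm_le_of_tendsto {u : ℕ → ℂ} {U : ℂ} (hu : Tendsto u atTop (𝓝 U)) :
    ∃ B, ∀ n, ‖u n‖ ≤ B := by
  obtain ⟨B, hB⟩ := hu.norm.bddAbove_range
  exact ⟨B, fun n => hB ⟨n, rfl⟩⟩

lemma tendsto_sum_mul_sub_mul_add {u v c : ℕ → ℂ} {U V : ℂ} (hu : Tendsto u atTop (𝓝 U))
    (hv : Tendsto v atTop (𝓝 V)) (hc : Summable fun m => ‖c m‖) :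
    Tendsto (fun n => ∑ m ∈ Finset.range (n + 1), c m * (u (n - m) * v (n + m + 1))) atTop
      (𝓝 ((∑' m, c m) * (U * V))) := by
  obtain ⟨A, hA⟩ := exists_norm_le_of_tendsto hu
  obtain ⟨B, hB⟩ := exists_norm_le_of_tendsto hv
  have hA0 : 0 ≤ A := (norm_nonneg _).trans (hA 0)
  have hB0 : 0 ≤ B := (norm_nonneg _).trans (hB 0)
  have hsum (n : ℕ) : ∑ m ∈ Finset.range (n + 1), c m * (u (n - m) * v (n + m + 1)) =
      ∑' m, if m ∈ Finset.range (n + 1) then c m * (u (n - m) * v (n + m + 1)) else 0 := by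
    rw [tsum_eq_sum (s := Finset.range (n + 1)) fun m hm => if_neg hm]
    exact Finset.sum_congr rfl fun m hm => (if_pos hm).symm
  simp only [hsum]
  rw [← tsum_mul_right]
  refine tendsto_tsum_of_dominated_convergence (bound := fun m => ‖c m‖ * (A * B))
    (hc.mul_right _) (fun m => ?_) (Eventually.of_forall fun n m => ?_)
  · refine Tendsto.congr' (f₁ := fun n => c m * (u (n - m) * v (n + m + 1))) ?_ ?_
    · filter_upwards [eventually_ge_atTop m] with n hn
      rw [if_pos (Finset.mem_range_succ_iff.2 hn)]
    · have hadd : Tendsto (fun n => n + m + 1) atTop atTop :=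
        tendsto_add_atTop_nat (m + 1)
      exact ((hu.comp (tendsto_sub_atTop_nat m)).mul (hv.comp hadd)).const_mul (c m)
  · split_ifs
    · rw [norm_mul, norm_mul]
      gcongr
      exacts [hA _, hB _]
    · rw [norm_zero]
      positivity

lemma summable_norm_theta (hq : ‖q‖ < 1) :
    Summable fun m : ℕ => ‖(-1) ^ m * q ^ (5 * m.choose 2 + 4 * m) * (1 - q ^ (2 * m + 1))‖ := by
  refine ((summable_geometric_of_lt_one (norm_nonneg q) hq).mul_right 2).of_nonneg_of_le
    (fun _ => norm_nonneg _) fun m => ?_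
  rw [norm_mul, norm_mul, norm_pow (-1 : ℂ), norm_neg, norm_one, one_pow, one_mul]
  gcongr
  · exact norm_pow_le_norm_pow hq (by omega)
  · refine (norm_sub_le _ _).trans ?_
    have := norm_pow_le_norm_pow hq (Nat.zero_le (2 * m + 1))
    rw [pow_zero] at this
    rw [norm_one]
    linarith

lemma tsum_mul_qPochhammerInv (hq : ‖q‖ < 1) :
    (∑' n : ℕ, q ^ (n ^ 2 + n) * qPochhammerInv q n) * ∏' j : ℕ, (1 - q ^ (j + 1)) =
      ∑' m : ℕ, (-1) ^ m * q ^ (5 * m.choose 2 + 4 * m) * (1 - q ^ (2 * m + 1)) := by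
  have hlim := tendsto_qPochhammerInv hq
  obtain ⟨B, hB⟩ := exists_norm_le_of_tendsto hlim
  have hsum : Summable fun n : ℕ => ‖q ^ (n ^ 2 + n) * qPochhammerInv q n‖ := by
    refine ((summable_geometric_of_lt_one (norm_nonneg q) hq).mul_right B).of_nonneg_of_le
      (fun _ => norm_nonneg _) fun n => ?_
    rw [norm_mul]
    gcongr
    exacts [norm_pow_le_norm_pow hq (by omega), hB n]
  have hleft := tendsto_sum_mul_sub_mul_add hlim (tendsto_const_nhds (x := (1 : ℂ))) hsum
  have hright := tendsto_sum_mul_sub_mul_add hlim hlim (summable_norm_theta hq)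
  simp only [mul_one, sum_rogersRamanujan_finite (one_sub_pow_succ_ne_zero hq)] at hleft
  have hP := tprod_one_sub_pow_ne_zero hq fun i => i.lt_succ_self
  have := tendsto_nhds_unique hleft hright
  field_simp at this
  linear_combination this

/-- The Jacobi triple product in base `q ^ 5`. -/
lemma tsum_theta (hq : ‖q‖ < 1) (hq0 : q ≠ 0) :
    ∑' m : ℕ, (-1) ^ m * q ^ (5 * m.choose 2 + 4 * m) * (1 - q ^ (2 * m + 1)) =
      (∏' i : ℕ, (1 - q ^ (5 * i + 1))) * (∏' i : ℕ, (1 - q ^ (5 * i + 4))) *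
        ∏' i : ℕ, (1 - q ^ (5 * i + 5)) := by
  have hq5 : ‖q ^ 5‖ < 1 := by
    rw [norm_pow]; exact pow_lt_one₀ (norm_nonneg q) hq (by norm_num)
  have hlim := tendsto_qPochhammerInv hq5
  have hbase (i : ℕ) : (q ^ 5) ^ (i + 1) = q ^ (5 * i + 5) := by ring
  simp only [hbase] at hlim
  have hleft := tendsto_sum_mul_sub_mul_add hlim hlim (summable_norm_theta hq)
  simp only [sum_jacobiTriple_finite (one_sub_pow_succ_ne_zero hq) hq0] at hleft
  have hodd : Tendsto (fun n : ℕ => 2 * n + 1) atTop atTop :=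
    tendsto_atTop_mono (fun n => by rw [id]; omega) tendsto_id
  have h1 := (multipliable_one_sub_pow hq
    (e := fun i => 5 * i + 1) fun i => by omega).hasProd.tendsto_prod_nat
  have h4 := (multipliable_one_sub_pow hq
    (e := fun i => 5 * i + 4) fun i => by omega).hasProd.tendsto_prod_nat
  have hright := (hlim.comp hodd).mul ((h1.comp (tendsto_add_atTop_nat 1)).mul h4)
  have hQ := tprod_one_sub_pow_ne_zero hq (e := fun i => 5 * i + 5) fun i => by omega
  have := tendsto_nhds_unique hleft hright
  field_simp at this
  linear_combination this

lemma tprod_one_sub_pow_succ_eq (hq : ‖q‖ < 1) :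
    ∏' j : ℕ, (1 - q ^ (j + 1)) =
      (∏' i : ℕ, (1 - q ^ (5 * i + 1))) * (∏' i : ℕ, (1 - q ^ (5 * i + 2))) *
        (∏' i : ℕ, (1 - q ^ (5 * i + 3))) * (∏' i : ℕ, (1 - q ^ (5 * i + 4))) *
        ∏' i : ℕ, (1 - q ^ (5 * i + 5)) := by
  have hlim (b : ℕ) := (multipliable_one_sub_pow hq
    (e := fun i => 5 * i + b) fun i => by omega).hasProd.tendsto_prod_nat
  have hall := (multipliable_one_sub_pow hq (e := fun j => j + 1) fun i => i.le_succ).hasProd.tendsto_prod_nat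
  have hfive : Tendsto (fun n : ℕ => 5 * n) atTop atTop :=
    tendsto_atTop_mono (fun n => by rw [id]; omega) tendsto_id
  refine tendsto_nhds_unique (hall.comp hfive) ?_
  refine (((((hlim 1).mul (hlim 2)).mul (hlim 3)).mul (hlim 4)).mul (hlim 5)).congr fun n => ?_
  simp only [Function.comp_apply]
  induction n with
  | zero => simp
  | succ n ih =>
    rw [show 5 * (n + 1) = 5 * n + 1 + 1 + 1 + 1 + 1 by ring]
    simp only [Finset.prod_range_succ, ← ih]
    ring

end Analytic

/-- The second Rogers–Ramanujan identity:
`∏_{n≥0} 1/((1-q^{5n+2})(1-q^{5n+3})) = ∑_{n≥0} q^{n²+n}/((1-q)⋯(1-qⁿ))`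
for `|q| < 1`. -/
theorem rogers_ramanujan_second (q : ℂ) (hq : ‖q‖ < 1) :
    ∏' n : ℕ, ((1 - q ^ (5 * n + 2)) * (1 - q ^ (5 * n + 3)))⁻¹
      = ∑' n : ℕ, q ^ (n ^ 2 + n) / ∏ j ∈ Finset.range n, (1 - q ^ (j + 1)) := by
  obtain rfl | hq0 := eq_or_ne q 0
  · rw [tsum_eq_single 0 fun n hn => by simp [hn]]
    simp
  have hmult (b : ℕ) : Multipliable fun i : ℕ => 1 - q ^ (5 * i + b) :=
    multipliable_one_sub_pow hq fun i => by omega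
  have hne (b : ℕ) : ∏' i : ℕ, (1 - q ^ (5 * i + (b + 1))) ≠ 0 :=
    tprod_one_sub_pow_ne_zero hq fun i => by omega
  have htprod := (hmult 2).tprod_mul (hmult 3)
  rw [((hmult 2).mul (hmult 3)).tprod_inv₀ (by rw [htprod]; exact mul_ne_zero (hne 1) (hne 2)),
    htprod]
  have hmain := tsum_mul_qPochhammerInv hq
  rw [tsum_theta hq hq0, tprod_one_sub_pow_succ_eq hq] at hmain
  simp only [qPochhammerInv, ← div_eq_mul_inv] at hmain
  refine inv_eq_of_mul_eq_one_left ?_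
  refine mul_right_cancel₀ (mul_ne_zero (mul_ne_zero (hne 0) (hne 3)) (hne 4)) ?_
  linear_combination hmain
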